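/- There exists a universal constant K > 0 such that for every k ≥ 1 and every ψ ∈ C_c^∞(ℝ²) with supp ψ ⊂ {2^{k−1} ≤ |x| ≤ 2^{k+1}}, the function F(θ) := T(|x|^{−2}ψ)(0,θ) on S¹ satisfies max_{0 ≤ j ≤ 3} sup_{θ∈S¹} |∂_θ^j F(θ)| ≤ K ‖ψ‖_{S¹₃}. -/

import Mathlib

open MeasureTheory Real

noncomputable section

/-- Directional derivative of a function on `ℝ²` in the direction `v`. -/
def pd (v : ℝ × ℝ) (ψ : ℝ × ℝ → ℝ) : ℝ × ℝ → ℝ := fun p => fderiv ℝ ψ p v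

/-- The X-ray transform `Tψ(s,θ)`. -/
def xray (ψ : ℝ × ℝ → ℝ) (s θ : ℝ) : ℝ :=
  ∫ t : ℝ, ψ (t * Real.cos θ - s * Real.sin θ, t * Real.sin θ + s * Real.cos θ)

/-- The function `x ↦ |x|⁻² ψ(x)` on `ℝ²`. -/
def invSq (ψ : ℝ × ℝ → ℝ) : ℝ × ℝ → ℝ := fun p => (p.1 ^ 2 + p.2 ^ 2)⁻¹ * ψ p

/-- The Kohn–Nirenberg norm `‖ψ‖_{S¹₃}` is at most `C`. -/
def KNle (ψ : ℝ × ℝ → ℝ) (C : ℝ) : Prop :=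
  ∀ γ₁ γ₂ : ℕ, γ₁ + γ₂ ≤ 3 → ∀ p : ℝ × ℝ,
    |Real.sqrt (1 + p.1 ^ 2 + p.2 ^ 2) ^ ((γ₁ + γ₂ : ℤ) - 1) *
      (pd (1, 0))^[γ₁] ((pd (0, 1))^[γ₂] ψ) p| ≤ C

/-- The dyadic annulus `{2^{k−1} ≤ |x| ≤ 2^{k+1}}` in `ℝ²`. -/
def annulus (k : ℕ) : Set (ℝ × ℝ) :=
  {p | (2 : ℝ) ^ ((k : ℤ) - 1) ≤ Real.sqrt (p.1 ^ 2 + p.2 ^ 2) ∧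
       Real.sqrt (p.1 ^ 2 + p.2 ^ 2) ≤ 2 ^ (k + 1)}

/-!
Write `e(θ) = (cos θ, sin θ)`. In polar coordinates `F(θ) = ∫ t⁻² ψ(t e(θ)) dt`, and all derivatives
in `θ` can be taken under the integral sign. Since every derivative of `e` has norm at most `1`,
Faà di Bruno's formula bounds `∂_θ^j ψ(t e(θ))` by `j!` times the largest of the numbers
`|t|^i ‖D^i ψ(t e(θ))‖`, `i ≤ j`. The weight `⟨x⟩^{|γ|-1}` in the Kohn–Nirenberg norm is exactly the
one for which each of these is `O(⟨t⟩) = O(|t|)` on the annulus. The integrand is thus `O(|t|⁻¹)`,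
whose integral over a dyadic annulus does not depend on its scale.
-/

section ParametricIntegral

variable {α 𝕜 E : Type*} [MeasurableSpace α] {μ : Measure α} [NormedAddCommGroup E]

lemma aestronglyMeasurable_of_hasDerivAt [NontriviallyNormedField 𝕜] [NormedSpace 𝕜 E]
    {F : 𝕜 → α → E} {F' : α → E} {x : 𝕜} (hF : ∀ y, AEStronglyMeasurable (F y) μ)
    (hF' : ∀ᵐ a ∂μ, HasDerivAt (F · a) (F' a) x) : AEStronglyMeasurable F' μ := by
  obtain ⟨u, hu⟩ := Filter.exists_seq_tendsto (nhdsWithin x {x}ᶜ)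
  refine aestronglyMeasurable_of_tendsto_ae Filter.atTop
    (f := fun n a => slope (F · a) x (u n)) (fun n => ?_) ?_
  · exact ((hF _).sub (hF _)).const_smul _
  · filter_upwards [hF'] with a ha using ha.tendsto_slope.comp hu

lemma aestronglyMeasurable_iteratedDeriv [NontriviallyNormedField 𝕜] [NormedSpace 𝕜 E]
    {F : 𝕜 → α → E} {n : ℕ} (hF : ∀ᵐ a ∂μ, ContDiff 𝕜 n (F · a))
    (hmeas : ∀ x, AEStronglyMeasurable (F x) μ) {j : ℕ} (hj : j ≤ n) (x : 𝕜) :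
    AEStronglyMeasurable (fun a => iteratedDeriv j (F · a) x) μ := by
  induction j generalizing x with
  | zero => simpa using hmeas x
  | succ j ih =>
    refine aestronglyMeasurable_of_hasDerivAt (x := x) (ih (by omega)) ?_
    filter_upwards [hF] with a ha
    rw [iteratedDeriv_succ]
    exact (ha.differentiable_iteratedDeriv j (mod_cast hj) x).hasDerivAt

lemma iteratedDeriv_integral_of_dominated [RCLike 𝕜] [NormedSpace ℝ E] [NormedSpace 𝕜 E]
    {F : 𝕜 → α → E} {bound : α → ℝ} {n : ℕ} (hF : ∀ᵐ a ∂μ, ContDiff 𝕜 n (F · a))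
    (hmeas : ∀ x, AEStronglyMeasurable (F x) μ) (hint : Integrable bound μ)
    (hbound : ∀ i ≤ n, ∀ᵐ a ∂μ, ∀ x, ‖iteratedDeriv i (F · a) x‖ ≤ bound a) {j : ℕ} (hj : j ≤ n) :
    iteratedDeriv j (fun x => ∫ a, F x a ∂μ) = fun x => ∫ a, iteratedDeriv j (F · a) x ∂μ := by
  induction j with
  | zero => simp only [iteratedDeriv_zero]
  | succ j ih =>
    have hj' : j ≤ n := by omega
    have hmeas' := fun i (hi : i ≤ n) => aestronglyMeasurable_iteratedDeriv hF hmeas hi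
    rw [iteratedDeriv_succ, ih hj']
    funext x
    refine (hasDerivAt_integral_of_dominated_loc_of_deriv_le
      (F' := fun y a => iteratedDeriv (j + 1) (F · a) y) Filter.univ_mem
      (.of_forall (hmeas' j hj')) (hint.mono' (hmeas' j hj' x) ?_) (hmeas' _ hj x) ?_ hint
      ?_).2.deriv
    · filter_upwards [hbound j hj'] with a ha using ha x
    · filter_upwards [hbound _ hj] with a ha y _ using ha y
    · filter_upwards [hF] with a ha y _
      rw [iteratedDeriv_succ]
      exact (ha.differentiable_iteratedDeriv j (mod_cast hj) y).hasDerivAt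

end ParametricIntegral

lemma norm_iteratedFDeriv_comp_smul_le {𝕜 E F G : Type*} [NontriviallyNormedField 𝕜]
    [NormedAddCommGroup E] [NormedSpace 𝕜 E] [NormedAddCommGroup F] [NormedSpace 𝕜 F]
    [NormedAddCommGroup G] [NormedSpace 𝕜 G] {g : F → G} {f : E → F} {n : ℕ}
    (hg : ContDiff 𝕜 n g) (hf : ContDiff 𝕜 n f) (t : 𝕜) (x : E) {C D : ℝ}
    (hC : ∀ i ≤ n, ‖t‖ ^ i * ‖iteratedFDeriv 𝕜 i g (t • f x)‖ ≤ C)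
    (hD : ∀ i, 1 ≤ i → i ≤ n → ‖iteratedFDeriv 𝕜 i f x‖ ≤ D ^ i) :
    ‖iteratedFDeriv 𝕜 n (fun y => g (t • f y)) x‖ ≤ n.factorial * C * D ^ n := by
  refine norm_iteratedFDeriv_comp_le (g := fun z => g (t • z))
    (hg.comp (contDiff_id.const_smul t)) hf le_rfl x (fun i hi => ?_) hD
  rw [iteratedFDeriv_comp_const_smul t (hg.of_le (mod_cast hi)), norm_smul, norm_pow]
  exact hC i hi

section PartialDerivatives

variable {ψ : ℝ × ℝ → ℝ}

lemma contDiff_pd {n : ℕ} (hψ : ContDiff ℝ (n + 1) ψ) (v : ℝ × ℝ) : ContDiff ℝ n (pd v ψ) :=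
  (hψ.fderiv_right le_rfl).clm_apply contDiff_const

lemma pd_comm (hψ : ContDiff ℝ 2 ψ) (v w : ℝ × ℝ) : pd v (pd w ψ) = pd w (pd v ψ) := by
  funext p
  have hd : DifferentiableAt ℝ (fderiv ℝ ψ) p :=
    (hψ.fderiv_right (m := 1) (by norm_num)).differentiable one_ne_zero p
  have hpd_pd : ∀ a b, pd a (pd b ψ) p = fderiv ℝ (fderiv ℝ ψ) p a b := fun a b => by
    change fderiv ℝ (fun q => fderiv ℝ ψ q b) p a = _
    simp [fderiv_clm_apply hd (differentiableAt_const b)]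
  rw [hpd_pd, hpd_pd, (hψ.contDiffAt.isSymmSndFDerivAt (by simp)).eq]

lemma pd_iterate_comm {n : ℕ} (hψ : ContDiff ℝ (n + 1) ψ) (v w : ℝ × ℝ) :
    (pd w)^[n] (pd v ψ) = pd v ((pd w)^[n] ψ) := by
  induction n generalizing ψ with
  | zero => rfl
  | succ n ih =>
    rw [Function.iterate_succ_apply, Function.iterate_succ_apply,
      pd_comm (hψ.of_le (by norm_cast; omega)), ih (mod_cast contDiff_pd hψ w)]

lemma fderiv_eq_toSpanSingleton_pd (ψ : ℝ × ℝ → ℝ) :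
    fderiv ℝ ψ =
      ContinuousLinearMap.toSpanSingleton ℝ (ContinuousLinearMap.fst ℝ ℝ ℝ) ∘ pd (1, 0) ψ +
      ContinuousLinearMap.toSpanSingleton ℝ (ContinuousLinearMap.snd ℝ ℝ ℝ) ∘ pd (0, 1) ψ := by
  funext p
  ext <;> simp [pd]

lemma norm_iteratedFDeriv_succ_le_pd {n : ℕ} (hψ : ContDiff ℝ (n + 1) ψ) (p : ℝ × ℝ) :
    ‖iteratedFDeriv ℝ (n + 1) ψ p‖ ≤
      ‖iteratedFDeriv ℝ n (pd (1, 0) ψ) p‖ + ‖iteratedFDeriv ℝ n (pd (0, 1) ψ) p‖ := by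
  have hle : ∀ (L : ℝ × ℝ →L[ℝ] ℝ) (v : ℝ × ℝ), ‖L‖ ≤ 1 →
      ‖iteratedFDeriv ℝ n (ContinuousLinearMap.toSpanSingleton ℝ L ∘ pd v ψ) p‖ ≤
        ‖iteratedFDeriv ℝ n (pd v ψ) p‖ := fun L v hL =>
    ((ContinuousLinearMap.toSpanSingleton ℝ L).norm_iteratedFDeriv_comp_left
      (contDiff_pd hψ v).contDiffAt le_rfl).trans
      (mul_le_of_le_one_left (norm_nonneg _) (by simpa using hL))
  rw [← norm_iteratedFDeriv_fderiv, fderiv_eq_toSpanSingleton_pd, iteratedFDeriv_add_apply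
    ((ContinuousLinearMap.contDiff _).comp (contDiff_pd hψ _)).contDiffAt
    ((ContinuousLinearMap.contDiff _).comp (contDiff_pd hψ _)).contDiffAt]
  exact (norm_add_le _ _).trans (add_le_add
    (hle _ _ (ContinuousLinearMap.norm_fst_le ℝ ℝ ℝ))
    (hle _ _ (ContinuousLinearMap.norm_snd_le ℝ ℝ ℝ)))

lemma norm_iteratedFDeriv_le_two_pow_mul {n : ℕ} {M : ℝ} {p : ℝ × ℝ} (hψ : ContDiff ℝ n ψ)
    (hM : ∀ a b, a + b = n → |(pd (1, 0))^[a] ((pd (0, 1))^[b] ψ) p| ≤ M) :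
    ‖iteratedFDeriv ℝ n ψ p‖ ≤ 2 ^ n * M := by
  induction n generalizing ψ with
  | zero => simpa using hM 0 0 rfl
  | succ n ih =>
    have hψ' : ContDiff ℝ (n + 1) ψ := mod_cast hψ
    have hx : ‖iteratedFDeriv ℝ n (pd (1, 0) ψ) p‖ ≤ 2 ^ n * M :=
      ih (contDiff_pd hψ' _) fun a b hab => by
        rw [pd_iterate_comm (hψ.of_le (by norm_cast; omega)), ← Function.iterate_succ_apply]
        exact hM (a + 1) b (by omega)
    have hy : ‖iteratedFDeriv ℝ n (pd (0, 1) ψ) p‖ ≤ 2 ^ n * M :=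
      ih (contDiff_pd hψ' _) fun a b hab => hM a (b + 1) (by omega)
    calc ‖iteratedFDeriv ℝ (n + 1) ψ p‖ ≤ 2 ^ n * M + 2 ^ n * M :=
          (norm_iteratedFDeriv_succ_le_pd hψ' p).trans (add_le_add hx hy)
      _ = 2 ^ (n + 1) * M := by ring

end PartialDerivatives

/-- The Japanese bracket `⟨x⟩ = √(1 + |x|²)`, with `|x|` the Euclidean norm. -/
def bracket (p : ℝ × ℝ) : ℝ := √(1 + p.1 ^ 2 + p.2 ^ 2)

lemma bracket_pos (p : ℝ × ℝ) : 0 < bracket p := Real.sqrt_pos.2 (by positivity)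

namespace KNle

variable {ψ : ℝ × ℝ → ℝ} {C : ℝ}

lemma nonneg (h : KNle ψ C) : 0 ≤ C := (abs_nonneg _).trans (h 0 0 (by norm_num) 0)

lemma abs_pd_iterate_le (h : KNle ψ C) {a b : ℕ} (hab : a + b ≤ 3) (p : ℝ × ℝ) :
    |(pd (1, 0))^[a] ((pd (0, 1))^[b] ψ) p| ≤ C * bracket p / bracket p ^ (a + b) := by
  have hp := bracket_pos p
  have hweighted : |bracket p ^ ((a + b : ℤ) - 1) * _| ≤ C := h a b hab p
  rw [abs_mul, abs_of_pos (zpow_pos hp _), zpow_sub_one₀ hp.ne', ← Nat.cast_add, zpow_natCast,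
    mul_right_comm, ← div_eq_mul_inv, div_le_iff₀ hp] at hweighted
  rwa [le_div_iff₀' (pow_pos hp _)]

lemma bracket_pow_mul_norm_iteratedFDeriv_le (h : KNle ψ C) {n : ℕ} (hn : n ≤ 3)
    (hψ : ContDiff ℝ n ψ) (p : ℝ × ℝ) :
    bracket p ^ n * ‖iteratedFDeriv ℝ n ψ p‖ ≤ 2 ^ n * C * bracket p := by
  have hle := norm_iteratedFDeriv_le_two_pow_mul (p := p) hψ fun a b hab =>
    hab ▸ h.abs_pd_iterate_le (hab.trans_le hn) p
  rwa [← mul_div_assoc, le_div_iff₀' (pow_pos (bracket_pos p) n), ← mul_assoc] at hle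

end KNle

/-- The point `(cos θ, sin θ)` of the unit circle, so that `t • circlePoint θ` has polar
coordinates `(t, θ)`, with `t` of either sign. -/
def circlePoint (θ : ℝ) : ℝ × ℝ := (Real.cos θ, Real.sin θ)

lemma contDiff_circlePoint {n : WithTop ℕ∞} : ContDiff ℝ n circlePoint :=
  Real.contDiff_cos.prodMk Real.contDiff_sin

lemma norm_iteratedFDeriv_circlePoint_le_one (n : ℕ) (θ : ℝ) :
    ‖iteratedFDeriv ℝ n circlePoint θ‖ ≤ 1 := by
  unfold circlePoint
  rw [iteratedFDeriv_prodMk (n := n) Real.contDiff_cos.contDiffAt Real.contDiff_sin.contDiffAt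
    le_rfl, ContinuousMultilinearMap.opNorm_prod, max_le_iff,
    norm_iteratedFDeriv_eq_norm_iteratedDeriv, norm_iteratedFDeriv_eq_norm_iteratedDeriv]
  exact ⟨Real.abs_iteratedDeriv_cos_le_one n θ, Real.abs_iteratedDeriv_sin_le_one n θ⟩

lemma sq_add_sq_smul_circlePoint (t θ : ℝ) :
    (t • circlePoint θ).1 ^ 2 + (t • circlePoint θ).2 ^ 2 = t ^ 2 := by
  simp only [circlePoint, Prod.smul_mk, smul_eq_mul]
  linear_combination t ^ 2 * Real.cos_sq_add_sin_sq θ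

lemma bracket_smul_circlePoint (t θ : ℝ) : bracket (t • circlePoint θ) = √(1 + t ^ 2) := by
  rw [bracket, add_assoc, sq_add_sq_smul_circlePoint]

lemma smul_circlePoint_mem_annulus {k : ℕ} {t θ : ℝ} :
    t • circlePoint θ ∈ annulus k ↔ |t| ∈ Set.Icc ((2 : ℝ) ^ ((k : ℤ) - 1)) (2 ^ (k + 1)) := by
  rw [annulus, Set.mem_ofPred_eq, sq_add_sq_smul_circlePoint, Real.sqrt_sq_eq_abs, Set.mem_Icc]

section RadialIntegral

variable {ψ : ℝ × ℝ → ℝ} {n : ℕ} {r R A : ℝ}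

lemma xray_invSq_zero (ψ : ℝ × ℝ → ℝ) :
    xray (invSq ψ) 0 = fun θ => ∫ t : ℝ, (t ^ 2)⁻¹ * ψ (t • circlePoint θ) := by
  funext θ
  refine integral_congr_ae (.of_forall fun t => ?_)
  simp only [zero_mul, sub_zero, add_zero]
  change invSq ψ (t • circlePoint θ) = _
  rw [invSq, sq_add_sq_smul_circlePoint]

lemma contDiff_comp_smul_circlePoint (hψ : ContDiff ℝ n ψ) (t : ℝ) :
    ContDiff ℝ n fun θ => ψ (t • circlePoint θ) :=
  hψ.comp (contDiff_circlePoint.const_smul t)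

lemma aestronglyMeasurable_radial (hψ : Continuous ψ) (θ : ℝ) :
    AEStronglyMeasurable fun t : ℝ => (t ^ 2)⁻¹ * ψ (t • circlePoint θ) := by
  have hcont : Continuous fun t : ℝ => ψ (t • circlePoint θ) := by fun_prop
  exact ((measurable_id.pow_const 2).inv.mul hcont.measurable).aestronglyMeasurable

lemma abs_iteratedDeriv_radial_le (hψ : ContDiff ℝ n ψ) (hr : 0 < r) (hrR : r ≤ R)
    (hsupp : ∀ t θ, |t| ∉ Set.Icc r R → ψ (t • circlePoint θ) = 0)
    (hA : ∀ i ≤ n, ∀ t θ, |t| ∈ Set.Icc r R →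
      |t| ^ i * ‖iteratedFDeriv ℝ i ψ (t • circlePoint θ)‖ ≤ A * |t|)
    {j : ℕ} (hj : j ≤ n) (t θ : ℝ) :
    |iteratedDeriv j (fun θ => (t ^ 2)⁻¹ * ψ (t • circlePoint θ)) θ| ≤
      (Set.Icc (-R) R).indicator (fun _ => n.factorial * A / r) t := by
  have hA₀ : 0 ≤ A := by
    have h := hA 0 n.zero_le r 0 (by rw [abs_of_pos hr]; exact ⟨le_rfl, hrR⟩)
    exact nonneg_of_mul_nonneg_left ((by positivity : (0 : ℝ) ≤ _).trans h) (abs_pos.2 hr.ne')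
  by_cases ht : |t| ∈ Set.Icc r R
  · have ht₀ : 0 < |t| := hr.trans_le ht.1
    have hcomp :
        |iteratedDeriv j (fun θ => ψ (t • circlePoint θ)) θ| ≤ j.factorial * (A * |t|) := by
      simpa [norm_iteratedFDeriv_eq_norm_iteratedDeriv] using norm_iteratedFDeriv_comp_smul_le
        (D := 1) (hψ.of_le (mod_cast hj)) contDiff_circlePoint t θ
        (fun i hi => hA i (hi.trans hj) t θ ht)
        (fun i _ _ => by simpa using norm_iteratedFDeriv_circlePoint_le_one i θ)
    rw [Set.indicator_of_mem (Set.mem_Icc.2 (abs_le.1 ht.2)), iteratedDeriv_const_mul_field,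
      abs_mul, abs_inv, abs_of_nonneg (sq_nonneg t), ← sq_abs]
    calc (|t| ^ 2)⁻¹ * |iteratedDeriv j (fun θ => ψ (t • circlePoint θ)) θ|
        ≤ (|t| ^ 2)⁻¹ * (j.factorial * (A * |t|)) := by gcongr
      _ = j.factorial * A / |t| := by field_simp
      _ ≤ n.factorial * A / r := by gcongr; exact ht.1
  · simp only [hsupp t _ ht, mul_zero, iteratedDeriv_fun_const_zero, abs_zero]
    exact Set.indicator_nonneg (fun _ _ => by positivity) t

theorem abs_iteratedDeriv_xray_invSq_le (hψ : ContDiff ℝ n ψ) (hr : 0 < r) (hrR : r ≤ R)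
    (hsupp : ∀ t θ, |t| ∉ Set.Icc r R → ψ (t • circlePoint θ) = 0)
    (hA : ∀ i ≤ n, ∀ t θ, |t| ∈ Set.Icc r R →
      |t| ^ i * ‖iteratedFDeriv ℝ i ψ (t • circlePoint θ)‖ ≤ A * |t|)
    (θ : ℝ) :
    |iteratedDeriv n (xray (invSq ψ) 0) θ| ≤ 2 * n.factorial * A * (R / r) := by
  have hbound := fun i (hi : i ≤ n) => abs_iteratedDeriv_radial_le hψ hr hrR hsupp hA hi
  have hint : Integrable ((Set.Icc (-R) R).indicator fun _ : ℝ => n.factorial * A / r) :=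
    (integrable_indicator_iff measurableSet_Icc).2 (integrableOn_const (by simp))
  rw [xray_invSq_zero, iteratedDeriv_integral_of_dominated
    (.of_forall fun t => contDiff_const.mul (contDiff_comp_smul_circlePoint hψ t))
    (aestronglyMeasurable_radial hψ.continuous) hint (fun i hi => .of_forall (hbound i hi)) le_rfl]
  calc |∫ t, iteratedDeriv n (fun θ => (t ^ 2)⁻¹ * ψ (t • circlePoint θ)) θ|
      ≤ ∫ t, (Set.Icc (-R) R).indicator (fun _ => n.factorial * A / r) t :=
        (Real.norm_eq_abs _).symm.trans_le
          (norm_integral_le_of_norm_le hint (.of_forall fun t => hbound n le_rfl t θ))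
    _ = 2 * n.factorial * A * (R / r) := by
        rw [integral_indicator measurableSet_Icc, setIntegral_const,
          Real.volume_real_Icc_of_le (by linarith), smul_eq_mul]
        ring

end RadialIntegral

lemma sqrt_one_add_sq_le_three_mul_abs {t : ℝ} (ht : 1 / 2 ≤ |t|) : √(1 + t ^ 2) ≤ 3 * |t| := by
  rw [Real.sqrt_le_left (by positivity), ← sq_abs t]
  nlinarith

lemma KNle.abs_pow_mul_norm_iteratedFDeriv_le {ψ : ℝ × ℝ → ℝ} {C : ℝ} (h : KNle ψ C) {n : ℕ}
    (hn : n ≤ 3) (hψ : ContDiff ℝ n ψ) {t : ℝ} (ht : 1 / 2 ≤ |t|) (θ : ℝ) :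
    |t| ^ n * ‖iteratedFDeriv ℝ n ψ (t • circlePoint θ)‖ ≤ 24 * C * |t| := by
  have hC := h.nonneg
  have hle := h.bracket_pow_mul_norm_iteratedFDeriv_le hn hψ (t • circlePoint θ)
  rw [bracket_smul_circlePoint] at hle
  calc |t| ^ n * ‖iteratedFDeriv ℝ n ψ (t • circlePoint θ)‖
      ≤ √(1 + t ^ 2) ^ n * ‖iteratedFDeriv ℝ n ψ (t • circlePoint θ)‖ := by
        gcongr
        exact Real.abs_le_sqrt (by linarith)
    _ ≤ 2 ^ n * C * √(1 + t ^ 2) := hle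
    _ ≤ 2 ^ 3 * C * (3 * |t|) := by
        gcongr
        · norm_num
        · exact sqrt_one_add_sq_le_three_mul_abs ht
    _ = 24 * C * |t| := by ring

theorem xray_KN_bound_general {k : ℕ} {ψ : ℝ × ℝ → ℝ} (hψ : ContDiff ℝ 3 ψ)
    (hsupp : Function.support ψ ⊆ annulus k) {C : ℝ} (hC : KNle ψ C) {j : ℕ} (hj : j ≤ 3) (θ : ℝ) :
    |deriv^[j] (fun θ' => xray (invSq ψ) 0 θ') θ| ≤ 1152 * C := by
  have hr : (1 / 2 : ℝ) ≤ 2 ^ ((k : ℤ) - 1) := by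
    rw [zpow_sub_one₀ two_ne_zero, zpow_natCast]
    linarith [one_le_pow₀ (one_le_two (α := ℝ)) (n := k)]
  have hR : (2 : ℝ) ^ (k + 1) = 4 * 2 ^ ((k : ℤ) - 1) := by
    rw [zpow_sub_one₀ two_ne_zero, zpow_natCast]
    ring
  have hr₀ : (0 : ℝ) < 2 ^ ((k : ℤ) - 1) := by positivity
  have hle := abs_iteratedDeriv_xray_invSq_le (n := j) (R := 2 ^ (k + 1)) (A := 24 * C)
    (hψ.of_le (mod_cast hj)) hr₀ (by linarith)
    (fun t θ ht => by_contra fun hne => ht (smul_circlePoint_mem_annulus.1 (hsupp hne)))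
    (fun i hi t θ ht => hC.abs_pow_mul_norm_iteratedFDeriv_le (hi.trans hj)
      (hψ.of_le (mod_cast hi.trans hj)) (hr.trans ht.1) θ) θ
  rw [iteratedDeriv_eq_iterate, hR, mul_div_cancel_right₀ _ hr₀.ne'] at hle
  have hC₀ := hC.nonneg
  calc |deriv^[j] (xray (invSq ψ) 0) θ| ≤ 2 * j.factorial * (24 * C) * 4 := hle
    _ ≤ 2 * Nat.factorial 3 * (24 * C) * 4 := by gcongr
    _ = 1152 * C := by
        norm_num [Nat.factorial]
        ring

/-- For `ψ` supported in the dyadic annulus, the `C³` norm of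
`F(θ) = T(|x|⁻²ψ)(0,θ)` on `S¹` is controlled by `K ‖ψ‖_{S¹₃}` for a universal `K`. -/
theorem xray_KN_bound :
    ∃ K > (0:ℝ), ∀ k : ℕ, 1 ≤ k → ∀ ψ : ℝ × ℝ → ℝ, ContDiff ℝ (⊤ : ℕ∞) ψ →
      HasCompactSupport ψ → tsupport ψ ⊆ annulus k →
      ∀ C : ℝ, KNle ψ C →
      ∀ j : ℕ, j ≤ 3 → ∀ θ : ℝ,
        |deriv^[j] (fun θ' => xray (invSq ψ) 0 θ') θ| ≤ K * C :=
  ⟨1152, by norm_num, fun _ _ _ hψ _ hs _ hC _ hj θ => xray_KN_bound_general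
    (mod_cast contDiff_infty.1 hψ 3) ((subset_tsupport _).trans hs) hC hj θ⟩

end
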